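/- Let 𝓜 be an infinite MAD family on ℕ and let (Mₙ)_{n∈ℕ} be a sequence of pairwise distinct members of 𝓜. Then the sequence of points (y_{Mₙ})_{n∈ℕ} converges to x∞ in K₂. -/

import Mathlib

/-!
Convergence is tested along an arbitrary free ultrafilter `F` on the index set. By compactness of
βω, the sequence `U` converges along `F` to some `V`, where `A ∈ V` iff `A ∈ U n` for `F`-almost
all `n`. The limit `V` is free because singletons lie in no `U n`. It contains no member of the
family: a set `A` of the family lying in `U n` meets `M n` in an infinite set, so `A = M n`, and
by injectivity this happens for at most one `n`. Hence `V ≈₂ Uinf`, and continuity of `j₂` gives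
convergence to `j₂ V = j₂ Uinf` along `F`.
-/

/-- An ultrafilter on ℕ is free if it is not principal. -/
def FreeUF (U : Ultrafilter ℕ) : Prop := ∀ n : ℕ, U ≠ pure n

/-- `𝓜` is a MAD family on ℕ. -/
def IsMAD (𝓜 : Set (Set ℕ)) : Prop :=
  (∀ M ∈ 𝓜, M.Infinite) ∧
  (∀ M ∈ 𝓜, ∀ N ∈ 𝓜, M ≠ N → (M ∩ N).Finite) ∧
  (∀ D : Set ℕ, D.Infinite → ∃ M ∈ 𝓜, (D ∩ M).Infinite)

/-- The relation ≈₂ on βω associated with the MAD family `𝓜`: two distinct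
ultrafilters are identified iff both are free and either they share a member
of `𝓜` or neither contains a member of `𝓜`.  (For a MAD family this is an
equivalence relation.) -/
def relK2 (𝓜 : Set (Set ℕ)) (x y : Ultrafilter ℕ) : Prop :=
  x = y ∨ (FreeUF x ∧ FreeUF y ∧
    ((∃ M ∈ 𝓜, M ∈ x ∧ M ∈ y) ∨ ((∀ M ∈ 𝓜, M ∉ x) ∧ (∀ M ∈ 𝓜, M ∉ y))))

/-- K₂ = βω/≈₂ with the quotient topology. -/
abbrev K2 (𝓜 : Set (Set ℕ)) : Type := Quot (relK2 𝓜)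

/-- The natural quotient mapping j₂ : βω → K₂. -/
def j2 (𝓜 : Set (Set ℕ)) : Ultrafilter ℕ → K2 𝓜 := Quot.mk (relK2 𝓜)

theorem FreeUF.notMem_of_finite {U : Ultrafilter ℕ} (hU : FreeUF U) {s : Set ℕ}
    (hs : s.Finite) : s ∉ U := by
  intro h
  obtain ⟨n, -, hn⟩ := Ultrafilter.eq_pure_of_finite_mem hs h
  exact hU n hn

/-!
If `(Mₙ)` is a sequence of pairwise distinct members of 𝓜, then the points
`y_{Mₙ} = j₂(Mₙ*)` (represented as `j₂ (U n)` for free ultrafilters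
`U n ∋ M n`) converge to `x∞ = j₂(ω* \ ⋃ M*)` (represented as `j₂ Uinf`).
-/
theorem statement10 (𝓜 : Set (Set ℕ)) (hMAD : IsMAD 𝓜) (hinf : 𝓜.Infinite)
    (M : ℕ → Set ℕ) (hM : ∀ n, M n ∈ 𝓜) (hMinj : Function.Injective M)
    (U : ℕ → Ultrafilter ℕ) (hUfree : ∀ n, FreeUF (U n)) (hMU : ∀ n, M n ∈ U n)
    (Uinf : Ultrafilter ℕ) (hfree : FreeUF Uinf) (hUinf : ∀ A ∈ 𝓜, A ∉ Uinf) :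
    Filter.Tendsto (fun n => j2 𝓜 (U n)) Filter.atTop (nhds (j2 𝓜 Uinf)) := by
  rw [Filter.tendsto_iff_ultrafilter]
  intro F hF
  obtain ⟨V, -, hV⟩ := isCompact_univ.ultrafilter_le_nhds (F.map U) (by simp)
  have key : ∀ A ∈ V, ∀ᶠ n in (F : Filter ℕ), A ∈ U n := fun A hA =>
    hV ((ultrafilter_isOpen_basic A).mem_nhds hA)
  have hVfree : FreeUF V := by
    rintro k rfl
    obtain ⟨n, hn⟩ := (key {k} (by simp)).exists
    exact (hUfree n).notMem_of_finite (Set.finite_singleton k) hn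
  have hVM : ∀ A ∈ 𝓜, A ∉ V := by
    intro A hA hAV
    have h1 : ∀ᶠ n in (F : Filter ℕ), A = M n := by
      filter_upwards [key A hAV] with n hn
      by_contra hne
      exact (hUfree n).notMem_of_finite (hMAD.2.1 A hA (M n) (hM n) hne)
        (Filter.inter_mem hn (hMU n))
    obtain ⟨m, hm⟩ := h1.exists
    obtain ⟨n, hn, hmn⟩ := (h1.and (hF (Filter.eventually_gt_atTop m))).exists
    have hlt : m < n := hmn
    exact hlt.ne (hMinj (hm.symm.trans hn))
  have hrel : j2 𝓜 V = j2 𝓜 Uinf :=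
    Quot.sound (Or.inr ⟨hVfree, hfree, Or.inr ⟨hVM, hUinf⟩⟩)
  have hcont : Continuous (j2 𝓜) := continuous_quot_mk
  have hlim : Filter.Tendsto U F (nhds V) := hV
  rw [← hrel]
  exact (hcont.tendsto V).comp hlim
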